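/- arXiv:2108.12085 — 3 statements merged into one kernel-verified Lean document; each statement's English description precedes it below -/
import Mathlib

section
/- Let $X$ be a real random variable on a probability space $(\Omega,\mathcal F,P)$. For all real $\alpha>0$, $\gamma>0$ and $\beta>-1$ there exists a constant $C>0$, depending only on $\alpha$, $\beta$, $\gamma$, such that $\int_{1}^{\infty} u^{\beta}\ln(u)\, E\big[|X|^{\alpha}\,\mathbf 1\{|X|>u^{\gamma}\}\big]\, du \;\le\; C\, E\big[|X|^{(\beta+1)/\gamma+\alpha}\,\ln(1+|X|)\big]$. -/
open MeasureTheory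

/-!
By Tonelli, the left-hand side is the expectation of
`|X|^α * ∫_{u > 1, u^γ < |X|} u^β ln u du`. On the domain of the inner integral
`ln u ≤ ln (1 + |X|) / γ` and `0 < u ≤ |X|^(1/γ)`, so that integral is at most
`(ln (1 + |X|) / γ) * ∫_0^{|X|^(1/γ)} u^β du = ln (1 + |X|) * |X|^((β+1)/γ) / (γ (β+1))`.
Hence `C = 1 / (γ (β+1))` works.
-/

lemma lintegral_rpow_Ioc {β b : ℝ} (hβ : -1 < β) (hb : 0 ≤ b) :
    ∫⁻ u in Set.Ioc 0 b, ENNReal.ofReal (u ^ β) = ENNReal.ofReal (b ^ (β + 1) / (β + 1)) := by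
  have hint : IntervalIntegrable (fun u : ℝ => u ^ β) volume 0 b :=
    intervalIntegral.intervalIntegrable_rpow' hβ
  rw [← ofReal_integral_eq_lintegral_ofReal
    ((intervalIntegrable_iff_integrableOn_Ioc_of_le hb).1 hint)
    ((ae_restrict_iff' measurableSet_Ioc).2
      (ae_of_all _ fun u hu => Real.rpow_nonneg hu.1.le _)),
    ← intervalIntegral.integral_of_le hb, integral_rpow (Or.inl hβ),
    Real.zero_rpow (by linarith), sub_zero]

/-- The integral over `u` for a fixed value `x` of `|X|`; the constraint `u ^ γ < x` is encoded
by the indicator that also carries the factor `x ^ α`. -/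
lemma inner_bound {α γ β x : ℝ} (hα : 0 < α) (hγ : 0 < γ) (hβ : -1 < β) (hx : 0 ≤ x) :
    ∫⁻ u in Set.Ioi (1 : ℝ), ENNReal.ofReal (u ^ β * Real.log u) *
        (if u ^ γ < x then ENNReal.ofReal (x ^ α) else 0) ≤
      ENNReal.ofReal (1 / (γ * (β + 1))) *
        ENNReal.ofReal (x ^ ((β + 1) / γ + α) * Real.log (1 + x)) := by
  have hβ' : 0 < β + 1 := by linarith
  have hlog : 0 ≤ Real.log (1 + x) := Real.log_nonneg (by linarith)
  set K : ℝ := Real.log (1 + x) / γ * x ^ α with hK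
  have hK0 : 0 ≤ K := by positivity
  set b : ℝ := x ^ (1 / γ) with hb
  have hb0 : 0 ≤ b := by positivity
  calc _ ≤ ∫⁻ u in Set.Ioi (1 : ℝ), (Set.Ioc 0 b).indicator
            (fun u => ENNReal.ofReal (u ^ β) * ENNReal.ofReal K) u := by
        refine setLIntegral_mono' measurableSet_Ioi fun u hu => ?_
        have hu1 : 1 < u := hu
        have hu0 : 0 < u := by linarith
        split_ifs with h
        · have hub : u ≤ b := by
            rw [hb, one_div, Real.le_rpow_inv_iff_of_pos hu0.le hx hγ]
            exact h.le
          rw [Set.indicator_of_mem (Set.mem_Ioc.2 ⟨hu0, hub⟩),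
            ← ENNReal.ofReal_mul (by have := Real.log_nonneg hu1.le; positivity),
            ← ENNReal.ofReal_mul (by positivity)]
          apply ENNReal.ofReal_le_ofReal
          have hl : Real.log u ≤ Real.log (1 + x) / γ := by
            rw [le_div_iff₀ hγ, mul_comm, ← Real.log_rpow hu0]
            exact Real.log_le_log (by positivity) (by linarith)
          rw [hK, mul_assoc]
          gcongr
        · simp
    _ ≤ ∫⁻ u, (Set.Ioc 0 b).indicator
            (fun u => ENNReal.ofReal (u ^ β) * ENNReal.ofReal K) u :=
        setLIntegral_le_lintegral _ _
    _ = ENNReal.ofReal (b ^ (β + 1) / (β + 1)) * ENNReal.ofReal K := by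
        rw [lintegral_indicator measurableSet_Ioc, lintegral_mul_const _ (by fun_prop),
          lintegral_rpow_Ioc hβ hb0]
    _ = _ := by
        rw [← ENNReal.ofReal_mul (by positivity), ← ENNReal.ofReal_mul (by positivity),
          hb, ← Real.rpow_mul hx, Real.rpow_add_of_nonneg hx (by positivity) hα.le, hK,
          one_div_mul_eq_div]
        congr 1
        field_simp

/-- Classical specialization of Lemma 2.1(ii): for `α > 0`, `γ > 0`, `β > -1` there is a
constant `C > 0` depending only on `α, β, γ` with
`∫_1^∞ u^β ln(u) E[|X|^α 1{|X| > u^γ}] du ≤ C · E[|X|^{(β+1)/γ + α} ln(1+|X|)]`, in `[0, ∞]`. -/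
theorem stmt_10 (α γ β : ℝ) (hα : 0 < α) (hγ : 0 < γ) (hβ : -1 < β) :
    ∃ C > (0 : ℝ), ∀ (Ω : Type) [MeasurableSpace Ω] (P : Measure Ω)
      [IsProbabilityMeasure P] (X : Ω → ℝ), Measurable X →
      ∫⁻ u in Set.Ioi (1 : ℝ),
          ENNReal.ofReal (u ^ β * Real.log u) *
            ∫⁻ ω in {ω | u ^ γ < |X ω|}, ENNReal.ofReal (|X ω| ^ α) ∂P ≤
        ENNReal.ofReal C *
          ∫⁻ ω, ENNReal.ofReal (|X ω| ^ ((β + 1) / γ + α) * Real.log (1 + |X ω|)) ∂P := by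
  have hβ' : 0 < β + 1 := by linarith
  refine ⟨1 / (γ * (β + 1)), by positivity, fun Ω _ P _ X hX => ?_⟩
  have hXabs : Measurable fun ω => |X ω| := hX.abs
  have hind : Measurable fun p : ℝ × Ω =>
      if p.1 ^ γ < |X p.2| then ENNReal.ofReal (|X p.2| ^ α) else 0 := by
    exact Measurable.ite (measurableSet_lt (by fun_prop) (by fun_prop)) (by fun_prop) (by fun_prop)
  calc _ = ∫⁻ u in Set.Ioi (1 : ℝ), ∫⁻ ω, ENNReal.ofReal (u ^ β * Real.log u) *
            (if u ^ γ < |X ω| then ENNReal.ofReal (|X ω| ^ α) else 0) ∂P := by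
        refine lintegral_congr fun u => ?_
        have hu : Measurable fun ω =>
            if u ^ γ < |X ω| then ENNReal.ofReal (|X ω| ^ α) else 0 :=
          hind.comp measurable_prodMk_left
        rw [lintegral_const_mul _ hu,
          ← lintegral_indicator (measurableSet_lt measurable_const hXabs)]
        simp only [Set.indicator_apply, Set.mem_ofPred_eq]
    _ = ∫⁻ ω, (∫⁻ u in Set.Ioi (1 : ℝ), ENNReal.ofReal (u ^ β * Real.log u) *
            (if u ^ γ < |X ω| then ENNReal.ofReal (|X ω| ^ α) else 0)) ∂P := by
        refine lintegral_lintegral_swap (Measurable.aemeasurable ?_)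
        exact Measurable.mul (by fun_prop) hind
    _ ≤ ∫⁻ ω, ENNReal.ofReal (1 / (γ * (β + 1))) *
          ENNReal.ofReal (|X ω| ^ ((β + 1) / γ + α) * Real.log (1 + |X ω|)) ∂P :=
        lintegral_mono fun ω => inner_bound hα hγ hβ (abs_nonneg _)
    _ = _ := lintegral_const_mul _ (by fun_prop)
end

section
/- Let $X$ be a real random variable on a probability space $(\Omega,\mathcal F,P)$, and let $r>1$, $p>1/2$, $\beta$ be reals with $\beta+p>0$, and let $\varepsilon>0$. Assume the moment condition: $E\big[|X|^{(r-1)/(p+\beta)}\big]<\infty$ if $-p<\beta<-p/r$; $E\big[|X|^{r/p}\ln(1+|X|)\big]<\infty$ if $\beta=-p/r$; and $E\big[|X|^{r/p}\big]<\infty$ if $\beta>-p/r$. Then $\sum_{n=1}^{\infty} n^{r-2}\sum_{i=1}^{n} P\big(|X|>\varepsilon\, n^{p+\beta}\, i^{-\beta}\big)\;<\;\infty$. -/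
open MeasureTheory

/-!
By Tonelli the series equals `E[S(|X|)]`, where `S(x)` is the sum of `n^(r-2)` over the pairs
`1 ≤ i ≤ n` with `ε n^(p+β) i^(-β) < x`, so it suffices to bound `S` pointwise by a multiple of
the integrand of the moment condition.

Put `y = x / ε`, `q = p + β` and `t = (r-1)/q`. For fixed `i`, the condition on `n` says
`n < (y i^β)^(1/q)`, so the sum over `n` is `O((y i^β)^t)` because `r - 2 > -1`. Moreover
`i ≤ n` forces `i^p ≤ n^q i^(-β) < y`, that is `i ≤ y^(1/p)`. Hence
`S(x) = O(y^t ∑_{i ≤ y^(1/p)} i^(β t))` (`tsum_weight_le`), and the three regimes for `β` are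
`β t < -1`, `β t = -1` and `β t > -1`, where the last sum is respectively bounded, logarithmic,
or `O(y^((1 + β t)/p))` with `t + (1 + β t)/p = r/p`.
-/

/-- The telescoping step behind `sum_rpow_le`. -/
lemma rpow_le_mul_sub {a : ℝ} (ha : -1 < a) :
    ∃ C : ℝ, 0 ≤ C ∧ ∀ n : ℕ,
      ((n + 1 : ℕ) : ℝ) ^ a ≤ C * (((n + 1 : ℕ) : ℝ) ^ (a + 1) - (n : ℝ) ^ (a + 1)) := by
  rcases le_total 0 a with h | h
  · refine ⟨1, zero_le_one, fun n => ?_⟩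
    have hn : (0 : ℝ) ≤ n := n.cast_nonneg
    have h1 : (n : ℝ) ^ (a + 1) ≤ ((n + 1 : ℕ) : ℝ) ^ a * n := by
      rw [Real.rpow_add_one' hn (by linarith)]
      gcongr
      simp
    have h2 : ((n + 1 : ℕ) : ℝ) ^ (a + 1) = ((n + 1 : ℕ) : ℝ) ^ a * (n + 1 : ℕ) :=
      Real.rpow_add_one' (by positivity) (by linarith)
    rw [h2]
    push_cast at *
    linarith
  · have hb : 0 < a + 1 := by linarith
    refine ⟨(a + 1)⁻¹, by positivity, fun n => ?_⟩
    have hm : (0 : ℝ) < (n + 1 : ℕ) := by positivity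
    generalize hmd : ((n + 1 : ℕ) : ℝ) = m at *
    have hm1 : 1 ≤ m := by rw [← hmd]; push_cast; linarith [(n.cast_nonneg : (0 : ℝ) ≤ n)]
    have hn : (n : ℝ) = m * (1 + -m⁻¹) := by
      have : (n : ℝ) = m - 1 := by rw [← hmd]; push_cast; ring
      rw [this]; field_simp; ring
    have hinv : m⁻¹ ≤ 1 := inv_le_one_of_one_le₀ hm1
    have hbern : (1 + -m⁻¹) ^ (a + 1) ≤ 1 + (a + 1) * -m⁻¹ :=
      rpow_one_add_le_one_add_mul_self (by linarith) hb.le (by linarith)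
    have h2 : m ^ (a + 1) = m ^ a * m := Real.rpow_add_one hm.ne' a
    have h3 : (n : ℝ) ^ (a + 1) ≤ m ^ (a + 1) * (1 + (a + 1) * -m⁻¹) := by
      rw [hn, Real.mul_rpow hm.le (by linarith)]
      gcongr
    have h4 : m ^ (a + 1) * (1 + (a + 1) * -m⁻¹) = m ^ (a + 1) - (a + 1) * m ^ a := by
      rw [h2]; field_simp; ring
    rw [le_inv_mul_iff₀ hb]
    linarith

lemma sum_rpow_le {a : ℝ} (ha : -1 < a) :
    ∃ C : ℝ, 0 ≤ C ∧ ∀ M : ℝ, 0 ≤ M →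
      ∑ n ∈ Finset.Icc 1 ⌊M⌋₊, (n : ℝ) ^ a ≤ C * M ^ (a + 1) := by
  obtain ⟨C, hC, h⟩ := rpow_le_mul_sub ha
  refine ⟨C, hC, fun M hM => ?_⟩
  have key : ∀ N : ℕ, ∑ n ∈ Finset.Icc 1 N, (n : ℝ) ^ a ≤ C * (N : ℝ) ^ (a + 1) := by
    intro N
    induction N with
    | zero => simp; positivity
    | succ N ih =>
      rw [Finset.sum_Icc_succ_top (by omega)]
      have := h N
      linarith
  refine (key _).trans ?_
  have := Nat.floor_le hM
  gcongr
  linarith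

/-- The indicator-weighted term `n^(r-2) 1{1 ≤ i ≤ n, ε n^q i^(-β) < x}`. -/
noncomputable def pairWeight (r q β ε : ℝ) (n i : ℕ) (x : ℝ) : ENNReal :=
  if 1 ≤ i ∧ i ≤ n ∧ ε * (n : ℝ) ^ q * (i : ℝ) ^ (-β) < x then ENNReal.ofReal ((n : ℝ) ^ (r - 2))
  else 0

/-- A series of nonnegative terms supported in `[1, M]` is dominated by the corresponding finite
sum. -/
lemma tsum_le_ofReal_sum (f : ℕ → ENNReal) (g : ℕ → ℝ) (M : ℝ) (hg : ∀ n, 0 ≤ g n)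
    (hf : ∀ n, f n ≤ ENNReal.ofReal (g n))
    (h0 : ∀ n, f n ≠ 0 → 1 ≤ n ∧ (n : ℝ) ≤ M) :
    ∑' n, f n ≤ ENNReal.ofReal (∑ n ∈ Finset.Icc 1 ⌊M⌋₊, g n) := by
  rw [ENNReal.ofReal_sum_of_nonneg fun n _ => hg n, tsum_eq_sum (s := Finset.Icc 1 ⌊M⌋₊)]
  · exact Finset.sum_le_sum fun n _ => hf n
  · intro n hn
    by_contra hne
    obtain ⟨h1, h2⟩ := h0 n hne
    exact hn (Finset.mem_Icc.2 ⟨h1, Nat.le_floor h2⟩)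

/-- Summing out `n` first leaves a power sum over `i ≤ (x/ε)^(1/p)`. -/
lemma tsum_weight_le {r p β ε : ℝ} (hr : 1 < r) (hp : 0 < p) (hq : 0 < p + β) (hε : 0 < ε) :
    ∃ C : ℝ, 0 ≤ C ∧ ∀ x : ℝ, 0 ≤ x →
      ∑' i : ℕ, ∑' n : ℕ, pairWeight r (p + β) β ε n i x ≤
        ENNReal.ofReal (C * ((x / ε) ^ ((r - 1) / (p + β)) *
          ∑ i ∈ Finset.Icc 1 ⌊(x / ε) ^ (1 / p)⌋₊, (i : ℝ) ^ (β * ((r - 1) / (p + β))))) := by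
  obtain ⟨C, hC, hsum⟩ := sum_rpow_le (a := r - 2) (by linarith)
  refine ⟨C, hC, fun x hx => ?_⟩
  set q := p + β with hqdef
  set y := x / ε with hy
  have hy0 : 0 ≤ y := by positivity
  have hcond : ∀ n i : ℕ, pairWeight r q β ε n i x ≠ 0 →
      1 ≤ i ∧ i ≤ n ∧ (n : ℝ) ≤ (y * (i : ℝ) ^ β) ^ (1 / q) ∧ (i : ℝ) ≤ y ^ (1 / p) := by
    intro n i h
    have h' : 1 ≤ i ∧ i ≤ n ∧ ε * (n : ℝ) ^ q * (i : ℝ) ^ (-β) < x := by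
      by_contra hh
      exact h (if_neg hh)
    obtain ⟨hi, hin, hlt⟩ := h'
    have hi0 : (0 : ℝ) < i := by exact_mod_cast hi
    have hin' : (i : ℝ) ≤ n := by exact_mod_cast hin
    have hlt' : (n : ℝ) ^ q * (i : ℝ) ^ (-β) < y := by
      rw [hy, lt_div_iff₀ hε]; linarith
    refine ⟨hi, hin, ?_, ?_⟩
    · rw [one_div, Real.le_rpow_inv_iff_of_pos (by positivity) (by positivity) hq]
      rw [Real.rpow_neg hi0.le, ← div_eq_mul_inv, div_lt_iff₀ (by positivity)] at hlt'
      exact hlt'.le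
    · rw [one_div, Real.le_rpow_inv_iff_of_pos (by positivity) (by positivity) hp]
      calc (i : ℝ) ^ p = (i : ℝ) ^ q * (i : ℝ) ^ (-β) := by
            rw [← Real.rpow_add hi0]; congr 1; rw [hqdef]; ring
        _ ≤ (n : ℝ) ^ q * (i : ℝ) ^ (-β) := by gcongr
        _ ≤ y := hlt'.le
  have hinner : ∀ i : ℕ, ∑' n : ℕ, pairWeight r q β ε n i x ≤
      ENNReal.ofReal (C * (y ^ ((r - 1) / q) * (i : ℝ) ^ (β * ((r - 1) / q)))) := by
    intro i
    refine (tsum_le_ofReal_sum _ (fun n => (n : ℝ) ^ (r - 2)) ((y * (i : ℝ) ^ β) ^ (1 / q))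
      (fun n => by positivity) (fun n => ?_) (fun n hn => ?_)).trans ?_
    · unfold pairWeight
      split_ifs <;> simp
    · obtain ⟨h1, h2, h3, -⟩ := hcond n i hn
      exact ⟨h1.trans h2, h3⟩
    · refine ENNReal.ofReal_le_ofReal ((hsum _ (by positivity)).trans_eq ?_)
      rw [← Real.rpow_mul (by positivity), Real.mul_rpow hy0 (by positivity),
        ← Real.rpow_mul (by positivity)]
      congr 3 <;> ring_nf
  have houter := tsum_le_ofReal_sum (fun i => ∑' n : ℕ, pairWeight r q β ε n i x)
    (fun i => C * (y ^ ((r - 1) / q) * (i : ℝ) ^ (β * ((r - 1) / q)))) (y ^ (1 / p))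
    (fun i => by positivity) hinner (fun i hi => by
      obtain ⟨n, hn⟩ : ∃ n, pairWeight r q β ε n i x ≠ 0 := by
        by_contra! hall
        exact hi (by simp [hall])
      obtain ⟨h1, -, -, h4⟩ := hcond n i hn
      exact ⟨h1, h4⟩)
  simpa only [← Finset.mul_sum] using houter

/-- Tonelli reduces the series to a pointwise bound on the weighted count of pairs. -/
lemma series_lt_top {Ω : Type*} [MeasurableSpace Ω] (P : Measure Ω)
    (X : Ω → ℝ) (hmeas : Measurable X) (r q β ε : ℝ) (g : ℝ → ℝ) (K : ℝ)
    (hg : Integrable (fun ω => g |X ω|) P)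
    (hbound : ∀ x : ℝ, 0 ≤ x →
      ∑' i : ℕ, ∑' n : ℕ, pairWeight r q β ε n i x ≤ ENNReal.ofReal (K * g x)) :
    ∑' n : ℕ, ENNReal.ofReal ((n : ℝ) ^ (r - 2)) *
        ∑ i ∈ Finset.Icc 1 n,
          P {ω | ε * (n : ℝ) ^ q * (i : ℝ) ^ (-β) < |X ω|} < ⊤ := by
  have hset : ∀ n i : ℕ, MeasurableSet {ω | ε * (n : ℝ) ^ q * (i : ℝ) ^ (-β) < |X ω|} :=
    fun n i => measurableSet_lt measurable_const (by fun_prop)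
  have hw : ∀ n i : ℕ, (fun ω => pairWeight r q β ε n i |X ω|) =
      if i ∈ Finset.Icc 1 n then
        {ω | ε * (n : ℝ) ^ q * (i : ℝ) ^ (-β) < |X ω|}.indicator
          (fun _ => ENNReal.ofReal ((n : ℝ) ^ (r - 2)))
      else 0 := by
    intro n i
    funext ω
    by_cases h : i ∈ Finset.Icc 1 n
    · have h' := Finset.mem_Icc.1 h
      simp [pairWeight, h'.1, h'.2, Set.indicator_apply]
    · rw [if_neg h]
      rw [Finset.mem_Icc] at h
      exact if_neg fun hh => h ⟨hh.1, hh.2.1⟩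
  have hwm : ∀ n i : ℕ, Measurable (fun ω => pairWeight r q β ε n i |X ω|) := by
    intro n i
    rw [hw]
    split_ifs
    · exact measurable_const.indicator (hset n i)
    · exact measurable_const
  have hint : ∀ n i : ℕ, ∫⁻ ω, pairWeight r q β ε n i |X ω| ∂P =
      if i ∈ Finset.Icc 1 n then ENNReal.ofReal ((n : ℝ) ^ (r - 2)) *
        P {ω | ε * (n : ℝ) ^ q * (i : ℝ) ^ (-β) < |X ω|} else 0 := by
    intro n i
    rw [hw]
    split_ifs
    · exact lintegral_indicator_const (hset n i) _
    · exact lintegral_zero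
  have heq : ∑' n : ℕ, ENNReal.ofReal ((n : ℝ) ^ (r - 2)) *
        ∑ i ∈ Finset.Icc 1 n,
          P {ω | ε * (n : ℝ) ^ q * (i : ℝ) ^ (-β) < |X ω|} =
      ∫⁻ ω, ∑' i : ℕ, ∑' n : ℕ, pairWeight r q β ε n i |X ω| ∂P := by
    rw [lintegral_tsum fun i => (Measurable.tsum fun n => hwm n i).aemeasurable]
    rw [tsum_congr fun i => lintegral_tsum fun n => (hwm n i).aemeasurable, ENNReal.tsum_comm]
    refine tsum_congr fun n => ?_
    rw [tsum_eq_sum (s := Finset.Icc 1 n) fun i hi => by rw [hint, if_neg hi], Finset.mul_sum]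
    exact Finset.sum_congr rfl fun i hi => by rw [hint, if_pos hi]
  rw [heq]
  exact (lintegral_mono fun ω => hbound _ (abs_nonneg _)).trans_lt
    (hg.const_mul K).lintegral_lt_top

/-- The logarithmic regime. The factor `log (1 + x)` absorbs constants because the harmonic sum is
empty unless `x ≥ ε`, where `log (1 + x) ≥ log (1 + ε) > 0`. -/
lemma harmonic_bound {p ε : ℝ} (hp : 0 < p) (hε : 0 < ε) :
    ∃ K : ℝ, 0 ≤ K ∧ ∀ x : ℝ, 0 ≤ x →
      ∑ i ∈ Finset.Icc 1 ⌊(x / ε) ^ (1 / p)⌋₊, (i : ℝ) ^ (-1 : ℝ) ≤ K * Real.log (1 + x) := by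
  have hL : 0 < Real.log (1 + ε) := Real.log_pos (by linarith)
  refine ⟨(1 + 1 / p * |Real.log ε|) / Real.log (1 + ε) + 1 / p, by positivity, fun x hx => ?_⟩
  rcases lt_or_ge x ε with h | h
  · have hlt : (x / ε) ^ (1 / p) < 1 :=
      Real.rpow_lt_one (by positivity) ((div_lt_one hε).2 h) (by positivity)
    rw [Nat.floor_eq_zero.2 hlt]
    have : 0 ≤ Real.log (1 + x) := Real.log_nonneg (by linarith)
    simp only [zero_lt_one, Finset.Icc_eq_empty_of_lt, Finset.sum_empty]
    positivity
  · have hx0 : 0 < x := hε.trans_le h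
    have hM : 1 ≤ (x / ε) ^ (1 / p) :=
      Real.one_le_rpow ((one_le_div hε).2 h) (by positivity)
    have hh := harmonic_floor_le_one_add_log _ hM
    rw [harmonic_eq_sum_Icc, Real.log_rpow (by positivity),
      Real.log_div hx0.ne' hε.ne'] at hh
    push_cast at hh
    simp_rw [Real.rpow_neg_one]
    refine hh.trans ?_
    have h1 : Real.log x ≤ Real.log (1 + x) := Real.log_le_log hx0 (by linarith)
    have h2 : Real.log (1 + ε) ≤ Real.log (1 + x) := Real.log_le_log (by linarith) (by linarith)
    have h3 : -Real.log ε ≤ |Real.log ε| := neg_le_abs _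
    have h4 : 1 + 1 / p * |Real.log ε| ≤
        (1 + 1 / p * |Real.log ε|) / Real.log (1 + ε) * Real.log (1 + x) := by
      calc _ = (1 + 1 / p * |Real.log ε|) / Real.log (1 + ε) * Real.log (1 + ε) :=
            (div_mul_cancel₀ _ hL.ne').symm
        _ ≤ _ := by gcongr
    have h5 : 1 / p * (Real.log x - Real.log ε) ≤ 1 / p * (Real.log (1 + x) + |Real.log ε|) := by
      gcongr
      linarith
    linarith

/-- Classical form of the estimate of the term `I₄` (display (4.4)) in the proof of
Theorem 3.1: under the appropriate moment condition (in each of the three regimes for `β`),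
`∑_{n=1}^∞ n^{r-2} ∑_{i=1}^n P(|X| > ε n^{p+β} i^{-β}) < ∞`. -/
theorem stmt_16 {Ω : Type*} [MeasurableSpace Ω] (P : Measure Ω) [IsProbabilityMeasure P]
    (X : Ω → ℝ) (hmeas : Measurable X)
    (r p β : ℝ) (hr : 1 < r) (hp : 1 / 2 < p) (hβp : 0 < β + p)
    (hmom1 : -p < β → β < -p / r → Integrable (fun ω => |X ω| ^ ((r - 1) / (p + β))) P)
    (hmom2 : β = -p / r → Integrable (fun ω => |X ω| ^ (r / p) * Real.log (1 + |X ω|)) P)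
    (hmom3 : -p / r < β → Integrable (fun ω => |X ω| ^ (r / p)) P)
    (ε : ℝ) (hε : 0 < ε) :
    ∑' n : ℕ, ENNReal.ofReal ((n : ℝ) ^ (r - 2)) *
        ∑ i ∈ Finset.Icc 1 n,
          P {ω | ε * (n : ℝ) ^ (p + β) * (i : ℝ) ^ (-β) < |X ω|} < ⊤ := by
  have hp0 : 0 < p := by linarith
  have hr0 : 0 < r := by linarith
  have hq : 0 < p + β := by linarith
  obtain ⟨C, hC, hS⟩ := tsum_weight_le hr hp0 hq hε
  rcases lt_trichotomy β (-p / r) with h | h | h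
  · have hexp : β * ((r - 1) / (p + β)) < -1 := by
      rw [lt_div_iff₀ hr0] at h
      rw [mul_div_assoc', div_lt_iff₀ hq]
      linarith
    have hsm : Summable fun i : ℕ => (i : ℝ) ^ (β * ((r - 1) / (p + β))) :=
      Real.summable_nat_rpow.2 hexp
    set T := ∑' i : ℕ, (i : ℝ) ^ (β * ((r - 1) / (p + β)))
    refine series_lt_top P X hmeas r (p + β) β ε (fun x => x ^ ((r - 1) / (p + β)))
      (C * (ε ^ ((r - 1) / (p + β)))⁻¹ * T) (hmom1 (by linarith) h) fun x hx =>
      (hS x hx).trans (ENNReal.ofReal_le_ofReal ?_)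
    have hT := hsm.sum_le_tsum (Finset.Icc 1 ⌊(x / ε) ^ (1 / p)⌋₊) fun i _ => by positivity
    calc _ ≤ C * ((x / ε) ^ ((r - 1) / (p + β)) * T) := by gcongr
      _ = _ := by rw [Real.div_rpow hx hε.le]; ring
  · have ht : (r - 1) / (p + β) = r / p := by
      have hr1 : r - 1 ≠ 0 := by linarith
      have : p + β = p * (r - 1) / r := by rw [h]; field_simp; ring
      rw [this]
      field_simp
    have hexp : β * (r / p) = -1 := by rw [h]; field_simp
    obtain ⟨K, hK, hH⟩ := harmonic_bound hp0 hε
    rw [ht, hexp] at hS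
    refine series_lt_top P X hmeas r (p + β) β ε (fun x => x ^ (r / p) * Real.log (1 + x))
      (C * (ε ^ (r / p))⁻¹ * K) (hmom2 h) fun x hx =>
      (hS x hx).trans (ENNReal.ofReal_le_ofReal ?_)
    have hH' := hH x hx
    calc _ ≤ C * ((x / ε) ^ (r / p) * (K * Real.log (1 + x))) := by gcongr
      _ = _ := by rw [Real.div_rpow hx hε.le]; ring
  · have hexp : -1 < β * ((r - 1) / (p + β)) := by
      rw [div_lt_iff₀ hr0] at h
      rw [mul_div_assoc', lt_div_iff₀ hq]
      linarith
    obtain ⟨D, hD, hsum⟩ := sum_rpow_le hexp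
    refine series_lt_top P X hmeas r (p + β) β ε (fun x => x ^ (r / p))
      (C * (ε ^ (r / p))⁻¹ * D) (hmom3 h) fun x hx =>
      (hS x hx).trans (ENNReal.ofReal_le_ofReal ?_)
    have hy : 0 ≤ x / ε := by positivity
    have hs := hsum ((x / ε) ^ (1 / p)) (by positivity)
    have ht0 : 0 < (r - 1) / (p + β) := div_pos (by linarith) hq
    have he : (r - 1) / (p + β) + 1 / p * (β * ((r - 1) / (p + β)) + 1) = r / p := by
      field_simp
      ring
    have hpow : (x / ε) ^ ((r - 1) / (p + β)) *
        ((x / ε) ^ (1 / p)) ^ (β * ((r - 1) / (p + β)) + 1) = (x / ε) ^ (r / p) := by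
      rw [← Real.rpow_mul hy, ← Real.rpow_add_of_nonneg hy ht0.le
        (mul_nonneg (by positivity) (by linarith)), he]
    calc _ ≤ C * ((x / ε) ^ ((r - 1) / (p + β)) *
          (D * ((x / ε) ^ (1 / p)) ^ (β * ((r - 1) / (p + β)) + 1))) := by gcongr
      _ = C * D * (x / ε) ^ (r / p) := by rw [← hpow]; ring
      _ = _ := by rw [Real.div_rpow hx hε.le]; ring
end

section
/- Let $X$ be a real random variable on a probability space $(\Omega,\mathcal F,P)$ with $E[X]=0$, let $1/2<p\le 1$, $r>1$, and $\beta$ be a real number with $\beta+p>0$, and assume $E\big[|X|^{r/p}\big]<\infty$. Set $a_{ni}=i^{\beta}n^{-p-\beta}$ for $1\le i\le n$. Then there exists $\delta_0>0$ such that for every $0<\delta<\delta_0$, $\sum_{i=1}^{n} E\big[|a_{ni}X|\,\mathbf 1\{|a_{ni}X|>n^{-\delta}\}\big]\;\longrightarrow\;0 \quad\text{as } n\to\infty$. -/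
/-!
Write `q = r / p > 1`. On `{|Y| > n^{-δ}}` one has `|Y| ≤ n^{δ(q-1)} |Y|^q`, so each truncated
expectation is at most `n^{δ(q-1)} a_{ni}^q E|X|^q` (`truncated_integral_le`). The weights
are summed without distinguishing the position of `βq` relative to `-1`: for any `η > 0`,
`i^s = i^{s+1+η} i^{-1-η} ≤ n^{max(s+1+η, 0)} i^{-1-η}` when `1 ≤ i ≤ n`, and `∑ i^{-1-η}`
converges (`exists_sum_rpow_le`). With `s = βq` the total exponent of `n` is
`δ(q-1) - (r+s) + max(s+1+η, 0)`, which is negative for `η` and `δ` small since `r > 1` and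
`r + s = q(p+β) > 0`.
-/

open MeasureTheory Filter

/-- Markov-type bound for the tail expectation of `|a X|` above a level `t`. -/
lemma truncated_integral_le {Ω : Type*} [MeasurableSpace Ω] (P : Measure Ω)
    (X : Ω → ℝ) (hmeas : Measurable X) (hint : Integrable X P) (q : ℝ) (hq : 1 < q)
    (hmom : Integrable (fun ω => |X ω| ^ q) P) (a t : ℝ) (ha : 0 ≤ a) (ht : 0 < t) :
    ∫ ω in {ω | t < |a * X ω|}, |a * X ω| ∂P
      ≤ t ^ (1 - q) * a ^ q * ∫ ω, |X ω| ^ q ∂P := by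
  have hS : MeasurableSet {ω | t < |a * X ω|} :=
    measurableSet_lt measurable_const (by fun_prop)
  have hI : Integrable (fun ω => t ^ (1 - q) * a ^ q * |X ω| ^ q) P := hmom.const_mul _
  have hY : Integrable (fun ω => |a * X ω|) P := (hint.const_mul a).abs
  calc ∫ ω in {ω | t < |a * X ω|}, |a * X ω| ∂P
      ≤ ∫ ω in {ω | t < |a * X ω|}, t ^ (1 - q) * a ^ q * |X ω| ^ q ∂P := by
        refine setIntegral_mono_on hY.integrableOn hI.integrableOn hS ?_
        intro ω hω
        have hω' : t < |a * X ω| := hω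
        have hpos : 0 < |a * X ω| := ht.trans hω'
        have h1 : |a * X ω| ^ (1 - q) ≤ t ^ (1 - q) :=
          Real.rpow_le_rpow_of_nonpos ht hω'.le (by linarith)
        have h2 : a ^ q * |X ω| ^ q = |a * X ω| ^ q := by
          rw [abs_mul, abs_of_nonneg ha, Real.mul_rpow ha (abs_nonneg _)]
        rw [mul_assoc, h2]
        calc |a * X ω| = |a * X ω| ^ (1 - q) * |a * X ω| ^ q := by
              rw [← Real.rpow_add hpos]; simp
          _ ≤ t ^ (1 - q) * |a * X ω| ^ q := by gcongr
    _ ≤ ∫ ω, t ^ (1 - q) * a ^ q * |X ω| ^ q ∂P :=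
        setIntegral_le_integral hI (Eventually.of_forall fun ω => by dsimp; positivity)
    _ = _ := integral_const_mul _ _

/-- Power sums grow at most like `n^{max(s+1+η, 0)}`; the loss `η` avoids a separate treatment
of the logarithmic case `s = -1`. -/
lemma exists_sum_rpow_le (s η : ℝ) (hη : 0 < η) :
    ∃ C : ℝ, ∀ n : ℕ,
      ∑ i ∈ Finset.Icc 1 n, (i : ℝ) ^ s ≤ C * (n : ℝ) ^ (max (s + 1 + η) 0) := by
  have hsum : Summable (fun i : ℕ => (i : ℝ) ^ (-1 - η)) :=
    Real.summable_nat_rpow.2 (by linarith)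
  refine ⟨∑' i : ℕ, (i : ℝ) ^ (-1 - η), fun n => ?_⟩
  calc ∑ i ∈ Finset.Icc 1 n, (i : ℝ) ^ s
      ≤ ∑ i ∈ Finset.Icc 1 n, (i : ℝ) ^ (-1 - η) * (n : ℝ) ^ (max (s + 1 + η) 0) := by
        refine Finset.sum_le_sum fun i hi => ?_
        rw [Finset.mem_Icc] at hi
        have hi1 : (1 : ℝ) ≤ i := by exact_mod_cast hi.1
        have hin : (i : ℝ) ≤ n := by exact_mod_cast hi.2
        calc (i : ℝ) ^ s = (i : ℝ) ^ (-1 - η) * (i : ℝ) ^ (s + 1 + η) := by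
              rw [← Real.rpow_add (by linarith)]; congr 1; ring
          _ ≤ (i : ℝ) ^ (-1 - η) * (i : ℝ) ^ (max (s + 1 + η) 0) := by
              gcongr
              exact le_max_left _ _
          _ ≤ (i : ℝ) ^ (-1 - η) * (n : ℝ) ^ (max (s + 1 + η) 0) := by
              gcongr
    _ = (∑ i ∈ Finset.Icc 1 n, (i : ℝ) ^ (-1 - η)) * (n : ℝ) ^ (max (s + 1 + η) 0) := by
        rw [Finset.sum_mul]
    _ ≤ _ := by
        gcongr
        exact hsum.sum_le_tsum _ fun i _ => by positivity

/-- Classical form of the centering estimate (4.9) in the proof of Theorem 3.1: if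
`E[X] = 0`, `1/2 < p ≤ 1`, `r > 1`, `β + p > 0` and `E|X|^{r/p} < ∞`, then with
`a_{ni} = i^β n^{-p-β}` there is `δ₀ > 0` such that for all `0 < δ < δ₀`,
`∑_{i=1}^n E[|a_{ni} X| 1{|a_{ni} X| > n^{-δ}}] → 0` as `n → ∞`. -/
theorem stmt_18 {Ω : Type*} [MeasurableSpace Ω] (P : Measure Ω) [IsProbabilityMeasure P]
    (X : Ω → ℝ) (hmeas : Measurable X)
    (hint : Integrable X P) (hmean : ∫ ω, X ω ∂P = 0)
    (p r β : ℝ) (hp1 : 1 / 2 < p) (hp2 : p ≤ 1) (hr : 1 < r) (hβp : 0 < β + p)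
    (hmom : Integrable (fun ω => |X ω| ^ (r / p)) P) :
    ∃ δ₀ > (0 : ℝ), ∀ δ : ℝ, 0 < δ → δ < δ₀ →
      Tendsto (fun n : ℕ =>
          ∑ i ∈ Finset.Icc 1 n,
            ∫ ω in {ω | (n : ℝ) ^ (-δ) < |(i : ℝ) ^ β * (n : ℝ) ^ (-p - β) * X ω|},
              |(i : ℝ) ^ β * (n : ℝ) ^ (-p - β) * X ω| ∂P)
        atTop (nhds 0) := by
  have hp : 0 < p := by linarith
  obtain ⟨q, hq⟩ : ∃ q, q = r / p := ⟨_, rfl⟩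
  rw [← hq] at hmom
  have hqp : q * p = r := by rw [hq]; field_simp
  have hq1 : 1 < q := by rw [hq, lt_div_iff₀ hp]; linarith
  have hrs : 0 < r + β * q := by
    have := mul_pos (zero_lt_one.trans hq1) hβp
    nlinarith
  -- `c` is the available gap in the exponent; `η` and `δ (q - 1)` each consume at most half.
  obtain ⟨c, hc0, hc1, hc2⟩ : ∃ c > 0, c ≤ r - 1 ∧ c ≤ r + β * q :=
    ⟨min (r - 1) (r + β * q), lt_min (by linarith) hrs, min_le_left _ _, min_le_right _ _⟩
  obtain ⟨C, hC⟩ := exists_sum_rpow_le (β * q) (c / 2) (by linarith)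
  refine ⟨c / (2 * q), by positivity, fun δ hδ0 hδ => ?_⟩
  have hδq : δ * q < c / 2 := by
    rw [lt_div_iff₀ (by positivity)] at hδ
    linarith
  obtain ⟨M, hM⟩ : ∃ M, M = ∫ ω, |X ω| ^ q ∂P := ⟨_, rfl⟩
  have hM0 : 0 ≤ M := by rw [hM]; exact integral_nonneg fun ω => by dsimp; positivity
  obtain ⟨e, he⟩ : ∃ e, e = -(δ * (q - 1) - (r + β * q) + max (β * q + 1 + c / 2) 0) :=
    ⟨_, rfl⟩
  have he0 : 0 < e := by
    rw [he]
    rcases max_cases (β * q + 1 + c / 2) 0 with h | h <;> rw [h.1] <;> linarith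
  have hlim : Tendsto (fun n : ℕ => M * C * (n : ℝ) ^ (-e)) atTop (nhds 0) := by
    simpa using ((tendsto_rpow_neg_atTop he0).comp tendsto_natCast_atTop_atTop).const_mul (M * C)
  refine tendsto_of_tendsto_of_tendsto_of_le_of_le' tendsto_const_nhds hlim
    (Eventually.of_forall fun n => Finset.sum_nonneg fun i _ =>
      integral_nonneg fun ω => abs_nonneg _) ?_
  filter_upwards [eventually_ge_atTop 1] with n hn
  have hn0 : (0 : ℝ) < n := by exact_mod_cast hn
  calc _ ≤ ∑ i ∈ Finset.Icc 1 n,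
        M * (n : ℝ) ^ (δ * (q - 1) - (r + β * q)) * (i : ℝ) ^ (β * q) := by
        refine Finset.sum_le_sum fun i _ => ?_
        refine (truncated_integral_le P X hmeas hint q hq1 hmom
          ((i : ℝ) ^ β * (n : ℝ) ^ (-p - β)) ((n : ℝ) ^ (-δ)) (by positivity)
          (by positivity)).trans_eq ?_
        rw [← hM, Real.mul_rpow (by positivity) (by positivity), ← Real.rpow_mul hn0.le,
          ← Real.rpow_mul hn0.le, ← Real.rpow_mul (Nat.cast_nonneg i)]
        have : δ * (q - 1) - (r + β * q) = -δ * (1 - q) + (-p - β) * q := by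
          rw [← hqp]; ring
        rw [this, Real.rpow_add hn0]
        ring
    _ = M * (n : ℝ) ^ (δ * (q - 1) - (r + β * q)) * ∑ i ∈ Finset.Icc 1 n, (i : ℝ) ^ (β * q) := by
        rw [Finset.mul_sum]
    _ ≤ M * (n : ℝ) ^ (δ * (q - 1) - (r + β * q)) *
          (C * (n : ℝ) ^ (max (β * q + 1 + c / 2) 0)) := by
        gcongr
        exact hC n
    _ = M * C * (n : ℝ) ^ (-e) := by
        rw [he, neg_neg, Real.rpow_add hn0]
        ring
end
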